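/- Fix ρ = 1/√2 and ν = π/2 + nπ for some integer n. Then for every real number x, lim_{t→∞} Σ_{y ∈ ℤ, y ≤ x·t} P(X_t = y) = ∫_{−∞}^{x} g(y) dy, where g(y) = Θ_n(y) / (π(1−y²)√(1−2y²)) for y ∈ (−1/√2, 1/√2) and g(y) = 0 otherwise, with Θ_n(y) = 1 + {|α|² − |β|² + (−1)ⁿ·2 Im(α·conj(β))}·y. -/

import Mathlib

open Real Filter Topology MeasureTheory

noncomputable section

/-- `ρ₀ = √(1-ρ²)`. -/
def rz (ρ : ℝ) : ℝ := Real.sqrt (1 - ρ ^ 2)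

/-- `α₀ = ρ e^{iν}`. -/
def az (ρ ν : ℝ) : ℂ := (ρ : ℂ) * Complex.exp (Complex.I * (ν : ℂ))

/-- `B₋`. -/
def Bm (ρ ν : ℝ) : Matrix (Fin 2) (Fin 2) ℂ :=
  !![0, 0; ((rz ρ) ^ 2 : ℝ), ((rz ρ : ℝ) : ℂ) * (starRingEnd ℂ) (az ρ ν)]

/-- `B₀`. -/
def B0 (ρ ν : ℝ) : Matrix (Fin 2) (Fin 2) ℂ :=
  !![-(az ρ ν) * ((rz ρ : ℝ) : ℂ), -((ρ ^ 2 : ℝ) : ℂ);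
      -((ρ ^ 2 : ℝ) : ℂ), ((rz ρ : ℝ) : ℂ) * (starRingEnd ℂ) (az ρ ν)]

/-- `B₊`. -/
def Bp (ρ ν : ℝ) : Matrix (Fin 2) (Fin 2) ℂ :=
  !![-(az ρ ν) * ((rz ρ : ℝ) : ℂ), (((rz ρ) ^ 2 : ℝ) : ℂ); 0, 0]

/-- The quantum walk `Ψ_t : ℤ → ℂ²`. -/
def qwalk (ρ ν : ℝ) (α β : ℂ) : ℕ → ℤ → Fin 2 → ℂ
  | 0, x => if x = 0 then ![α, β] else 0
  | t + 1, x =>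
      (Bm ρ ν).mulVec (qwalk ρ ν α β t (x + 1)) + (B0 ρ ν).mulVec (qwalk ρ ν α β t x)
        + (Bp ρ ν).mulVec (qwalk ρ ν α β t (x - 1))

/-- `P(X_t = x) = ‖Ψ_t(x)‖²`. -/
def qprob (ρ ν : ℝ) (α β : ℂ) (t : ℕ) (x : ℤ) : ℝ :=
  ‖qwalk ρ ν α β t x 0‖ ^ 2 + ‖qwalk ρ ν α β t x 1‖ ^ 2

/-- `Θ_n(y) = 1 + {|α|² − |β|² + (−1)ⁿ·2 Im(α·conj(β))}·y`. -/
def Theta (n : ℤ) (α β : ℂ) (y : ℝ) : ℝ :=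
  1 + (‖α‖ ^ 2 - ‖β‖ ^ 2
    + (-1 : ℝ) ^ n * 2 * (α * (starRingEnd ℂ) β).im) * y

/-- The limit density `g` at the exceptional parameters. -/
def densStd (n : ℤ) (α β : ℂ) (y : ℝ) : ℝ :=
  if y ∈ Set.Ioo (-(1 / Real.sqrt 2)) (1 / Real.sqrt 2) then
    Theta n α β y / (π * (1 - y ^ 2) * Real.sqrt (1 - 2 * y ^ 2))
  else 0

/-! ### One-step recursion -/

lemma rz_val : rz (1 / Real.sqrt 2) = 1 / Real.sqrt 2 := by
  unfold rz
  have h : (1 : ℝ) - (1 / Real.sqrt 2) ^ 2 = (1 / Real.sqrt 2) ^ 2 := by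
    rw [div_pow, Real.sq_sqrt (by norm_num)]; norm_num
  rw [h, Real.sqrt_sq (by positivity)]

lemma inv_sqrt_sq : (1 / Real.sqrt 2) ^ 2 = 1 / 2 := by
  rw [div_pow, Real.sq_sqrt (by norm_num)]; norm_num

lemma exp_nu (n : ℤ) :
    Complex.exp (Complex.I * ((π / 2 + n * π : ℝ) : ℂ)) = Complex.I * (((-1 : ℝ) ^ n : ℝ) : ℂ) := by
  have : Complex.I * ((π / 2 + n * π : ℝ) : ℂ)
      = (π / 2) * Complex.I + n * (π * Complex.I) := by push_cast; ring
  rw [this, Complex.exp_add, Complex.exp_int_mul, Complex.exp_pi_mul_I,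
    Complex.exp_pi_div_two_mul_I]
  push_cast; rfl

lemma neg_one_zpow_sq (n : ℤ) : ((-1 : ℝ) ^ n) ^ 2 = 1 := by
  rcases Int.even_or_odd n with h | h
  · rw [h.neg_one_zpow]; norm_num
  · rw [h.neg_one_zpow]; norm_num

lemma rz_az (ρ ν : ℝ) (n : ℤ) (hρ : ρ = 1 / Real.sqrt 2) (hν : ν = π / 2 + n * π) :
    ((rz ρ : ℝ) : ℂ) * az ρ ν = Complex.I * (((-1 : ℝ) ^ n : ℝ) : ℂ) / 2 := by
  subst hρ hν
  rw [rz_val, az, exp_nu, ← mul_assoc, ← Complex.ofReal_mul, ← sq, inv_sqrt_sq]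
  push_cast; ring

lemma rz_az_conj (ρ ν : ℝ) (n : ℤ) (hρ : ρ = 1 / Real.sqrt 2) (hν : ν = π / 2 + n * π) :
    ((rz ρ : ℝ) : ℂ) * (starRingEnd ℂ) (az ρ ν)
      = -(Complex.I * (((-1 : ℝ) ^ n : ℝ) : ℂ) / 2) := by
  have := congrArg (starRingEnd ℂ) (rz_az ρ ν n hρ hν)
  rw [map_mul, Complex.conj_ofReal] at this
  rw [this]
  rw [map_div₀, map_mul, Complex.conj_I, Complex.conj_ofReal, map_ofNat]
  ring

lemma qwalk_rec (ρ ν : ℝ) (n : ℤ) (hρ : ρ = 1 / Real.sqrt 2) (hν : ν = π / 2 + n * π)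
    (α β : ℂ) (t : ℕ) (x : ℤ) (s : ℝ) (hs : s = (-1 : ℝ) ^ n) :
    qwalk ρ ν α β (t + 1) x 0
      = -(Complex.I * s / 2) * (qwalk ρ ν α β t x 0 + qwalk ρ ν α β t (x - 1) 0)
        + 1 / 2 * (qwalk ρ ν α β t (x - 1) 1 - qwalk ρ ν α β t x 1) ∧
    qwalk ρ ν α β (t + 1) x 1
      = 1 / 2 * (qwalk ρ ν α β t (x + 1) 0 - qwalk ρ ν α β t x 0)
        - (Complex.I * s / 2) * (qwalk ρ ν α β t (x + 1) 1 + qwalk ρ ν α β t x 1) := by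
  have h1 := rz_az ρ ν n hρ hν
  have h2 := rz_az_conj ρ ν n hρ hν
  have h3 : -(az ρ ν) * ((rz ρ : ℝ) : ℂ) = -(Complex.I * s / 2) := by
    rw [neg_mul, mul_comm, h1, hs]
  have h4 : (((rz ρ) ^ 2 : ℝ) : ℂ) = 1 / 2 := by
    rw [hρ, rz_val, inv_sqrt_sq]; push_cast; rfl
  have h5 : ((ρ ^ 2 : ℝ) : ℂ) = 1 / 2 := by
    rw [hρ, inv_sqrt_sq]; push_cast; rfl
  rw [← hs] at h2
  constructor
  · simp only [qwalk, Bm, B0, Bp, h2, h3, h4, h5, Pi.add_apply, Matrix.mulVec, dotProduct,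
      Fin.sum_univ_two, Matrix.of_apply, Matrix.cons_val_zero, Matrix.cons_val_one,
      Matrix.cons_val_fin_one]
    ring
  · simp only [qwalk, Bm, B0, Bp, h2, h3, h4, h5, Pi.add_apply, Matrix.mulVec, dotProduct,
      Fin.sum_univ_two, Matrix.of_apply, Matrix.cons_val_zero, Matrix.cons_val_one,
      Matrix.cons_val_fin_one]
    ring

lemma qwalk_support (ρ ν : ℝ) (α β : ℂ) (t : ℕ) :
    ∀ x : ℤ, x ∉ Finset.Icc (-(t : ℤ)) t → qwalk ρ ν α β t x = 0 := by
  induction t with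
  | zero =>
    intro x hx
    have : x ≠ 0 := by rintro rfl; simp at hx
    simp [qwalk, this]
  | succ t ih =>
    intro x hx
    simp only [Finset.mem_Icc] at hx ih
    rw [qwalk, ih (x + 1) (by push_cast at hx; omega), ih x (by push_cast at hx; omega),
      ih (x - 1) (by push_cast at hx; omega)]
    simp

/-! ### Eigen-decomposition in Fourier space -/

/-- normalising factor -/
def qq (θ : ℝ) : ℝ := Real.sqrt (1 + Real.cos θ ^ 2)

/-- eigenvalue -/
def EE (θ : ℝ) : ℂ := (Real.cos θ : ℂ) ^ 2 + Complex.I * Real.sin θ * qq θ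

/-- first component of the spectral projection -/
def pa (s : ℝ) (α β : ℂ) (σ : ℝ) (θ : ℝ) : ℂ :=
  (α + σ * ((Real.cos θ * α + Complex.I * s * Complex.exp (Complex.I * θ) * β) / qq θ)) / 2

/-- second component of the spectral projection -/
def pb (s : ℝ) (α β : ℂ) (σ : ℝ) (θ : ℝ) : ℂ :=
  (β - σ * ((Complex.I * s * Complex.exp (-(Complex.I * θ)) * α + Real.cos θ * β) / qq θ)) / 2

lemma qq_sq (θ : ℝ) : qq θ ^ 2 = 1 + Real.cos θ ^ 2 := Real.sq_sqrt (by positivity)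
lemma qq_pos (θ : ℝ) : 0 < qq θ := Real.sqrt_pos.2 (by positivity)
lemma one_le_qq (θ : ℝ) : 1 ≤ qq θ := by
  unfold qq; rw [Real.one_le_sqrt]; nlinarith [sq_nonneg (Real.cos θ)]

lemma EE_conj (θ : ℝ) :
    (starRingEnd ℂ) (EE θ) = (Real.cos θ : ℂ) ^ 2 - Complex.I * Real.sin θ * qq θ := by
  simp only [EE, map_add, map_mul, map_pow, Complex.conj_ofReal, Complex.conj_I]; ring

lemma EE_mul_conj (θ : ℝ) : EE θ * (starRingEnd ℂ) (EE θ) = 1 := by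
  rw [EE_conj, EE]
  have h1 : (qq θ : ℂ) ^ 2 = 1 + (Real.cos θ : ℂ) ^ 2 := by exact_mod_cast qq_sq θ
  have h2 : (Real.sin θ : ℂ) ^ 2 = 1 - (Real.cos θ : ℂ) ^ 2 := by
    exact_mod_cast Real.sin_sq θ
  linear_combination (Real.sin θ : ℂ) ^ 2 * h1 + (1 + (Real.cos θ : ℂ) ^ 2) * h2
    - (Real.sin θ : ℂ) ^ 2 * (qq θ : ℂ) ^ 2 * Complex.I_sq

lemma EE_norm (θ : ℝ) : ‖EE θ‖ = 1 := by
  have h := congrArg (‖·‖) (EE_mul_conj θ)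
  simp only [norm_mul, RCLike.norm_conj, norm_one] at h
  nlinarith [norm_nonneg (EE θ)]

/-- the eigen equations, stated for `λ = cos² + i σ sin q`. -/
lemma eigen (s : ℝ) (hs : s ^ 2 = 1) (α β : ℂ) (σ : ℝ) (hσ : σ ^ 2 = 1) (θ : ℝ) :
    let w := Complex.exp (2 * Complex.I * θ)
    let w' := Complex.exp (-(2 * Complex.I * θ))
    let lam := (Real.cos θ : ℂ) ^ 2 + σ * (Complex.I * Real.sin θ * qq θ)
    (-(Complex.I * s / 2) * (pa s α β σ θ + w * pa s α β σ θ)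
        + 1 / 2 * (w * pb s α β σ θ - pb s α β σ θ) = -(Complex.I * s) * (lam * pa s α β σ θ)) ∧
    (1 / 2 * (w' * pa s α β σ θ - pa s α β σ θ)
        - (Complex.I * s / 2) * (w' * pb s α β σ θ + pb s α β σ θ)
          = -(Complex.I * s) * (lam * pb s α β σ θ)) := by
  intro w w' lam
  set c : ℂ := (Real.cos θ : ℂ) with hc
  set S : ℂ := (Real.sin θ : ℂ) with hS
  have e1 : Complex.exp (Complex.I * θ) = c + S * Complex.I := by
    rw [mul_comm, Complex.exp_mul_I, hc, hS]; push_cast; rfl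
  have e2 : Complex.exp (-(Complex.I * θ)) = c - S * Complex.I := by
    rw [show -(Complex.I * (θ : ℂ)) = (-(θ : ℂ)) * Complex.I by ring, Complex.exp_mul_I, hc, hS,
      Complex.cos_neg, Complex.sin_neg]; push_cast; ring
  have hw : w = (c + S * Complex.I) ^ 2 := by
    rw [← e1, ← Complex.exp_nat_mul]; simp only [w]; congr 1; push_cast; ring
  have hw' : w' = (c - S * Complex.I) ^ 2 := by
    rw [← e2, ← Complex.exp_nat_mul]; simp only [w']; congr 1; push_cast; ring
  have h1 : (qq θ : ℂ) ^ 2 = 1 + c ^ 2 := by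
    rw [hc]; exact_mod_cast qq_sq θ
  have h2 : S ^ 2 = 1 - c ^ 2 := by
    rw [hS, hc]; exact_mod_cast Real.sin_sq θ
  have hs' : (s : ℂ) ^ 2 = 1 := by exact_mod_cast hs
  have hσ' : (σ : ℂ) ^ 2 = 1 := by exact_mod_cast hσ
  have hq : (qq θ : ℂ) ≠ 0 := by exact_mod_cast (qq_pos θ).ne'
  have hI := Complex.I_sq
  simp only [pa, pb, lam, hw, hw', e1, e2, ← hc]
  generalize (qq θ : ℂ) = q at *
  generalize (s : ℂ) = s at *
  generalize (σ : ℂ) = σ at *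
  generalize Complex.I = I at *
  clear_value c S
  constructor
  · field_simp
    grind
  · field_simp
    grind

/-- closed form of the Fourier transform, first component -/
def Fa (s : ℝ) (α β : ℂ) (t : ℕ) (θ : ℝ) : ℂ :=
  (-(Complex.I * s)) ^ t *
    (EE θ ^ t * pa s α β 1 θ + (starRingEnd ℂ) (EE θ) ^ t * pa s α β (-1) θ)

/-- closed form of the Fourier transform, second component -/
def Fb (s : ℝ) (α β : ℂ) (t : ℕ) (θ : ℝ) : ℂ :=
  (-(Complex.I * s)) ^ t *
    (EE θ ^ t * pb s α β 1 θ + (starRingEnd ℂ) (EE θ) ^ t * pb s α β (-1) θ)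

lemma F_step (s : ℝ) (hs : s ^ 2 = 1) (α β : ℂ) (t : ℕ) (θ : ℝ) :
    let w := Complex.exp (2 * Complex.I * θ)
    let w' := Complex.exp (-(2 * Complex.I * θ))
    (-(Complex.I * s / 2) * (Fa s α β t θ + w * Fa s α β t θ)
        + 1 / 2 * (w * Fb s α β t θ - Fb s α β t θ) = Fa s α β (t + 1) θ) ∧
    (1 / 2 * (w' * Fa s α β t θ - Fa s α β t θ)
        - (Complex.I * s / 2) * (w' * Fb s α β t θ + Fb s α β t θ) = Fb s α β (t + 1) θ) := by
  intro w w'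
  obtain ⟨h1, h2⟩ := eigen s hs α β 1 (by norm_num) θ
  obtain ⟨h3, h4⟩ := eigen s hs α β (-1) (by norm_num) θ
  have l1 : (Real.cos θ : ℂ) ^ 2 + ((1 : ℝ) : ℂ) * (Complex.I * Real.sin θ * qq θ) = EE θ := by
    rw [EE]; push_cast; ring
  have l2 : (Real.cos θ : ℂ) ^ 2 + ((-1 : ℝ) : ℂ) * (Complex.I * Real.sin θ * qq θ)
      = (starRingEnd ℂ) (EE θ) := by
    rw [EE_conj]; push_cast; ring
  rw [l1] at h1 h2
  rw [l2] at h3 h4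
  simp only [Fa, Fb]
  constructor
  · linear_combination (-(Complex.I * s)) ^ t * EE θ ^ t * h1
      + (-(Complex.I * s)) ^ t * (starRingEnd ℂ) (EE θ) ^ t * h3
  · linear_combination (-(Complex.I * s)) ^ t * EE θ ^ t * h2
      + (-(Complex.I * s)) ^ t * (starRingEnd ℂ) (EE θ) ^ t * h4

lemma hasSum_F (ρ ν : ℝ) (n : ℤ) (hρ : ρ = 1 / Real.sqrt 2) (hν : ν = π / 2 + n * π)
    (α β : ℂ) (s : ℝ) (hs : s = (-1 : ℝ) ^ n) (θ : ℝ) (t : ℕ) :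
    HasSum (fun x : ℤ => Complex.exp (2 * Complex.I * θ * x) * qwalk ρ ν α β t x 0)
      (Fa s α β t θ) ∧
    HasSum (fun x : ℤ => Complex.exp (2 * Complex.I * θ * x) * qwalk ρ ν α β t x 1)
      (Fb s α β t θ) := by
  have hs2 : s ^ 2 = 1 := by rw [hs]; exact neg_one_zpow_sq n
  induction t with
  | zero =>
    have a0 : Fa s α β 0 θ = α := by simp [Fa, pa]; ring
    have b0 : Fb s α β 0 θ = β := by simp [Fb, pb]; ring
    rw [a0, b0]
    constructor
    · convert hasSum_single (0 : ℤ) (f := fun x : ℤ =>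
        Complex.exp (2 * Complex.I * θ * x) * qwalk ρ ν α β 0 x 0) ?_ using 1
      · simp [qwalk]
      · intro x hx; simp [qwalk, hx]
    · convert hasSum_single (0 : ℤ) (f := fun x : ℤ =>
        Complex.exp (2 * Complex.I * θ * x) * qwalk ρ ν α β 0 x 1) ?_ using 1
      · simp [qwalk]
      · intro x hx; simp [qwalk, hx]
  | succ t ih =>
    obtain ⟨ha, hb⟩ := ih
    obtain ⟨sa, sb⟩ := F_step s hs2 α β t θ
    set w := Complex.exp (2 * Complex.I * θ) with hw
    set w' := Complex.exp (-(2 * Complex.I * θ)) with hw'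
    have ham := ((Equiv.subRight (1 : ℤ)).hasSum_iff.2 ha).mul_left w
    have hbm := ((Equiv.subRight (1 : ℤ)).hasSum_iff.2 hb).mul_left w
    have hap := ((Equiv.addRight (1 : ℤ)).hasSum_iff.2 ha).mul_left w'
    have hbp := ((Equiv.addRight (1 : ℤ)).hasSum_iff.2 hb).mul_left w'
    have em : ∀ x : ℤ, w * Complex.exp (2 * Complex.I * θ * ((x - 1 : ℤ) : ℂ))
        = Complex.exp (2 * Complex.I * θ * x) := by
      intro x; rw [hw, ← Complex.exp_add]; congr 1; push_cast; ring
    have ep : ∀ x : ℤ, w' * Complex.exp (2 * Complex.I * θ * ((x + 1 : ℤ) : ℂ))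
        = Complex.exp (2 * Complex.I * θ * x) := by
      intro x; rw [hw', ← Complex.exp_add]; congr 1; push_cast; ring
    simp only [Function.comp_apply, Equiv.subRight_apply, Equiv.coe_addRight, ← mul_assoc, em, ep]
      at ham hbm hap hbp
    rw [← sa, ← sb]
    constructor
    · have H := ((ha.add ham).mul_left (-(Complex.I * s / 2))).add ((hbm.sub hb).mul_left (1 / 2))
      refine Eq.mp (congrArg (fun f => HasSum f _) (funext fun x => ?_)) H
      rw [(qwalk_rec ρ ν n hρ hν α β t x s hs).1]; ring
    · have H := ((hap.sub ha).mul_left (1 / 2)).sub ((hbp.add hb).mul_left (Complex.I * s / 2))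
      refine Eq.mp (congrArg (fun f => HasSum f _) (funext fun x => ?_)) H
      rw [(qwalk_rec ρ ν n hρ hν α β t x s hs).2]; ring

lemma F_eq_sum (ρ ν : ℝ) (n : ℤ) (hρ : ρ = 1 / Real.sqrt 2) (hν : ν = π / 2 + n * π)
    (α β : ℂ) (s : ℝ) (hs : s = (-1 : ℝ) ^ n) (θ : ℝ) (t : ℕ) :
    Fa s α β t θ = ∑ x ∈ Finset.Icc (-(t : ℤ)) t,
      Complex.exp (2 * Complex.I * θ * x) * qwalk ρ ν α β t x 0 ∧
    Fb s α β t θ = ∑ x ∈ Finset.Icc (-(t : ℤ)) t,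
      Complex.exp (2 * Complex.I * θ * x) * qwalk ρ ν α β t x 1 := by
  obtain ⟨ha, hb⟩ := hasSum_F ρ ν n hρ hν α β s hs θ t
  refine ⟨ha.unique (hasSum_sum_of_ne_finset_zero ?_), hb.unique (hasSum_sum_of_ne_finset_zero ?_)⟩
  · intro x hx; rw [qwalk_support ρ ν α β t x hx]; simp
  · intro x hx; rw [qwalk_support ρ ν α β t x hx]; simp

/-- orthogonality of exponentials -/
lemma integral_exp_int (m : ℤ) :
    ∫ θ in (0 : ℝ)..π, Complex.exp (2 * Complex.I * θ * m) = if m = 0 then (π : ℂ) else 0 := by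
  split_ifs with h
  · subst h; simp
  · have hc : (2 * Complex.I * m) ≠ 0 := by simp [h]
    have := integral_exp_mul_complex (a := 0) (b := π) hc
    have e : ∀ θ : ℝ, 2 * Complex.I * θ * m = (2 * Complex.I * m) * θ := by intro θ; ring
    simp only [e]
    rw [this]
    have : Complex.exp (2 * Complex.I * m * π) = 1 := by
      rw [Complex.exp_eq_one_iff]; exact ⟨m, by ring⟩
    simp [this]

lemma parseval (S : Finset ℤ) (f : ℤ → ℂ) (δ : ℝ) :
    ∫ θ in (0 : ℝ)..π, (starRingEnd ℂ) (∑ x ∈ S, Complex.exp (2 * Complex.I * θ * x) * f x) *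
      (∑ x ∈ S, Complex.exp (2 * Complex.I * ((θ + δ : ℝ) : ℂ) * x) * f x)
    = π * ∑ x ∈ S, Complex.exp (2 * Complex.I * δ * x) * ((‖f x‖ ^ 2 : ℝ) : ℂ) := by
  have h1 : ∀ θ : ℝ, (starRingEnd ℂ) (∑ x ∈ S, Complex.exp (2 * Complex.I * θ * x) * f x) *
      (∑ x ∈ S, Complex.exp (2 * Complex.I * ((θ + δ : ℝ) : ℂ) * x) * f x)
      = ∑ x ∈ S, ∑ y ∈ S, ((starRingEnd ℂ) (f x) * f y * Complex.exp (2 * Complex.I * δ * y)) *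
        Complex.exp (2 * Complex.I * θ * ((y - x : ℤ) : ℂ)) := by
    intro θ
    rw [map_sum, Finset.sum_mul_sum]
    refine Finset.sum_congr rfl fun x _ => Finset.sum_congr rfl fun y _ => ?_
    rw [map_mul, ← Complex.exp_conj]
    simp only [map_mul, Complex.conj_I, Complex.conj_ofReal, map_intCast, map_ofNat]
    have : Complex.exp (2 * -Complex.I * θ * x) * Complex.exp (2 * Complex.I * ((θ + δ : ℝ) : ℂ) * y)
        = Complex.exp (2 * Complex.I * δ * y) *
          Complex.exp (2 * Complex.I * θ * ((y - x : ℤ) : ℂ)) := by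
      rw [← Complex.exp_add, ← Complex.exp_add]; congr 1; push_cast; ring
    linear_combination (starRingEnd ℂ) (f x) * f y * this
  simp only [h1]
  rw [intervalIntegral.integral_finsetSum]
  · rw [Finset.mul_sum]
    refine Finset.sum_congr rfl fun x hx => ?_
    rw [intervalIntegral.integral_finsetSum]
    · simp only [intervalIntegral.integral_const_mul, integral_exp_int]
      rw [Finset.sum_eq_single x]
      · rw [if_pos (sub_self x), Complex.ofReal_pow, ← Complex.conj_mul']; ring
      · intro y _ hy
        rw [if_neg (sub_ne_zero.2 hy), mul_zero]
      · intro h; exact absurd hx h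
    · intro y _
      apply Continuous.intervalIntegrable; fun_prop
  · intro x _
    apply Continuous.intervalIntegrable; fun_prop

/-! ### Pointwise limit -/

/-- group velocity -/
def vv (θ : ℝ) : ℝ := Real.cos θ / qq θ

/-- the coefficient of `y` in `Θ` -/
def CC (s : ℝ) (α β : ℂ) : ℝ :=
  ‖α‖ ^ 2 - ‖β‖ ^ 2 + s * 2 * (α * (starRingEnd ℂ) β).im

/-- expectation of the reflection `P₊ - P₋` -/
def nn (s : ℝ) (α β : ℂ) (θ : ℝ) : ℝ :=
  vv θ * CC s α β - 2 * s * Real.sin θ / qq θ * (α * (starRingEnd ℂ) β).re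

lemma continuous_qq : Continuous qq := by unfold qq; fun_prop

lemma continuous_vv : Continuous vv :=
  Real.continuous_cos.div continuous_qq fun θ => (qq_pos θ).ne'

lemma continuous_EE : Continuous EE := by
  have := continuous_qq
  unfold EE; fun_prop

lemma continuous_pa (s : ℝ) (α β : ℂ) (σ : ℝ) : Continuous (pa s α β σ) := by
  have := continuous_qq
  have h : ∀ θ : ℝ, (qq θ : ℂ) ≠ 0 := fun θ => by exact_mod_cast (qq_pos θ).ne'
  unfold pa; fun_prop (disch := assumption)

lemma continuous_pb (s : ℝ) (α β : ℂ) (σ : ℝ) : Continuous (pb s α β σ) := by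
  have := continuous_qq
  have h : ∀ θ : ℝ, (qq θ : ℂ) ≠ 0 := fun θ => by exact_mod_cast (qq_pos θ).ne'
  unfold pb; fun_prop (disch := assumption)

lemma nn_complex (s : ℝ) (α β : ℂ) (θ : ℝ) :
    (nn s α β θ : ℂ) = (Real.cos θ * (α * (starRingEnd ℂ) α - β * (starRingEnd ℂ) β)
      + Complex.I * s * ((Real.cos θ + Real.sin θ * Complex.I) * (β * (starRingEnd ℂ) α)
        - (Real.cos θ - Real.sin θ * Complex.I) * (α * (starRingEnd ℂ) β))) / qq θ := by
  have hq : (qq θ : ℂ) ≠ 0 := by exact_mod_cast (qq_pos θ).ne'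
  have hz : α * (starRingEnd ℂ) β = ((α * (starRingEnd ℂ) β).re : ℂ)
      + ((α * (starRingEnd ℂ) β).im : ℂ) * Complex.I := (Complex.re_add_im _).symm
  have hz' : β * (starRingEnd ℂ) α = ((α * (starRingEnd ℂ) β).re : ℂ)
      - ((α * (starRingEnd ℂ) β).im : ℂ) * Complex.I := by
    have := congrArg (starRingEnd ℂ) hz
    simp only [map_mul, map_add, Complex.conj_conj, Complex.conj_ofReal, Complex.conj_I] at this
    rw [mul_comm, this]; ring
  rw [hz', Complex.mul_conj', Complex.mul_conj', nn, vv, CC]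
  generalize hr : (α * (starRingEnd ℂ) β).re = r at *
  generalize hi : (α * (starRingEnd ℂ) β).im = i at *
  rw [hz]
  push_cast
  field_simp
  linear_combination (-2 * (s : ℂ) * Complex.sin θ * r + 2 * s * Complex.cos θ * i) * Complex.I_sq

lemma gram (s : ℝ) (hs : s ^ 2 = 1) (α β : ℂ) (hαβ : ‖α‖ ^ 2 + ‖β‖ ^ 2 = 1) (σ τ : ℝ) (θ : ℝ) :
    (starRingEnd ℂ) (pa s α β σ θ) * pa s α β τ θ + (starRingEnd ℂ) (pb s α β σ θ) * pb s α β τ θ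
      = (((1 + σ * τ + (σ + τ) * nn s α β θ) / 4 : ℝ) : ℂ) := by
  have hab : α * (starRingEnd ℂ) α + β * (starRingEnd ℂ) β = 1 := by
    rw [Complex.mul_conj', Complex.mul_conj']; exact_mod_cast hαβ
  push_cast
  rw [nn_complex]
  simp only [pa, pb, map_div₀, map_add, map_sub, map_mul, Complex.conj_ofReal, Complex.conj_I,
    ← Complex.exp_conj, map_neg, map_ofNat]
  set c : ℂ := (Real.cos θ : ℂ) with hc
  set S : ℂ := (Real.sin θ : ℂ) with hS
  have e1 : Complex.exp (Complex.I * θ) = c + S * Complex.I := by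
    rw [mul_comm, Complex.exp_mul_I, hc, hS]; push_cast; rfl
  have e2 : Complex.exp (-(Complex.I * θ)) = c - S * Complex.I := by
    rw [show -(Complex.I * (θ : ℂ)) = (-(θ : ℂ)) * Complex.I by ring, Complex.exp_mul_I, hc, hS,
      Complex.cos_neg, Complex.sin_neg]; push_cast; ring
  have e3 : -Complex.I * (θ : ℂ) = -(Complex.I * θ) := by ring
  rw [e3, neg_neg, e1, e2]
  have h1 : (qq θ : ℂ) ^ 2 = 1 + c ^ 2 := by
    rw [hc]; exact_mod_cast qq_sq θ
  have h2 : S ^ 2 = 1 - c ^ 2 := by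
    rw [hS, hc]; exact_mod_cast Real.sin_sq θ
  have hs' : (s : ℂ) ^ 2 = 1 := by exact_mod_cast hs
  have hq : (qq θ : ℂ) ≠ 0 := by exact_mod_cast (qq_pos θ).ne'
  have hI := Complex.I_sq
  generalize (qq θ : ℂ) = q at *
  generalize (s : ℂ) = s at *
  generalize (σ : ℂ) = σ at *
  generalize (τ : ℂ) = τ at *
  generalize Complex.I = I at *
  generalize (starRingEnd ℂ) α = a' at *
  generalize (starRingEnd ℂ) β = b' at *
  clear_value c S
  field_simp
  grind

lemma hasDerivAt_qq (θ : ℝ) : HasDerivAt qq (-(Real.cos θ * Real.sin θ) / qq θ) θ := by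
  have h := (((Real.hasDerivAt_cos θ).pow 2).const_add 1).sqrt
    (by positivity : 1 + Real.cos θ ^ 2 ≠ 0)
  refine h.congr_deriv ?_
  have := (qq_pos θ).ne'
  change _ / (2 * qq θ) = _
  field_simp
  norm_num
  try ring

lemma hasDerivAt_EE (θ : ℝ) : HasDerivAt EE (2 * Complex.I * vv θ * EE θ) θ := by
  have hc := (Real.hasDerivAt_cos θ).ofReal_comp
  have hS := (Real.hasDerivAt_sin θ).ofReal_comp
  have hq := (hasDerivAt_qq θ).ofReal_comp
  have h := (hc.pow 2).add ((hS.const_mul Complex.I).mul hq)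
  refine h.congr_deriv ?_
  have h1 : (qq θ : ℂ) ^ 2 = 1 + (Real.cos θ : ℂ) ^ 2 := by exact_mod_cast qq_sq θ
  have h2 : (Real.sin θ : ℂ) ^ 2 = 1 - (Real.cos θ : ℂ) ^ 2 := by
    exact_mod_cast Real.sin_sq θ
  have hq0 : (qq θ : ℂ) ≠ 0 := by exact_mod_cast (qq_pos θ).ne'
  have hI := Complex.I_sq
  rw [vv, EE]
  push_cast at *
  generalize (qq θ : ℂ) = q at *
  generalize Complex.cos θ = c at *
  generalize Complex.sin θ = S at *
  generalize Complex.I = I at *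
  clear h hc hS hq
  field_simp
  grind

lemma phase_limit (θ η : ℝ) :
    Tendsto (fun t : ℕ => ((starRingEnd ℂ) (EE θ) * EE (θ + η / t)) ^ t) atTop
      (𝓝 (Complex.exp (2 * Complex.I * η * vv θ))) := by
  have hE : (starRingEnd ℂ) (EE θ) * EE θ = 1 := by rw [mul_comm]; exact EE_mul_conj θ
  have key : Tendsto (fun t : ℕ => (t : ℂ) * ((starRingEnd ℂ) (EE θ) * EE (θ + η / t) - 1)) atTop
      (𝓝 (2 * Complex.I * η * vv θ)) := by
    have hd : HasDerivAt (fun u : ℝ => (starRingEnd ℂ) (EE θ) * EE (θ + η * u))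
        (2 * Complex.I * η * vv θ) 0 := by
      have h0 : HasDerivAt (fun u : ℝ => θ + η * u) η 0 := by
        simpa using ((hasDerivAt_id (0 : ℝ)).const_mul η).const_add θ
      have h1 : HasDerivAt EE (2 * Complex.I * vv θ * EE θ) (θ + η * 0) := by
        simpa using hasDerivAt_EE θ
      have h2 := (h1.scomp (0 : ℝ) h0).const_mul ((starRingEnd ℂ) (EE θ))
      refine h2.congr_deriv ?_
      rw [Complex.real_smul]
      linear_combination (2 * Complex.I * vv θ * η) * hE
    have hinv : Tendsto (fun t : ℕ => ((t : ℝ))⁻¹) atTop (𝓝[≠] 0) := by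
      rw [tendsto_nhdsWithin_iff]
      refine ⟨tendsto_inv_atTop_nhds_zero_nat, ?_⟩
      filter_upwards [eventually_gt_atTop 0] with t ht
      simp; omega
    have := (hasDerivAt_iff_tendsto_slope.1 hd).comp hinv
    refine this.congr' ?_
    filter_upwards [eventually_gt_atTop 0] with t ht
    simp only [Function.comp_apply, slope, vsub_eq_sub, sub_zero, inv_inv, mul_zero, add_zero, hE]
    rw [Complex.real_smul, div_eq_mul_inv]
    push_cast; rfl
  have := Complex.tendsto_one_add_pow_exp_of_tendsto key
  simpa using this

/-- the integrand -/
def GG (s : ℝ) (α β : ℂ) (t : ℕ) (θ θ' : ℝ) : ℂ :=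
  (starRingEnd ℂ) (Fa s α β t θ) * Fa s α β t θ' + (starRingEnd ℂ) (Fb s α β t θ) * Fb s α β t θ'

lemma GG_eq (s : ℝ) (hs : s ^ 2 = 1) (α β : ℂ) (t : ℕ) (θ θ' : ℝ) :
    GG s α β t θ θ' =
      ((starRingEnd ℂ) (EE θ) * EE θ') ^ t *
        ((starRingEnd ℂ) (pa s α β 1 θ) * pa s α β 1 θ'
          + (starRingEnd ℂ) (pb s α β 1 θ) * pb s α β 1 θ')
      + (starRingEnd ℂ) (((starRingEnd ℂ) (EE θ) * EE θ') ^ t) *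
        ((starRingEnd ℂ) (pa s α β (-1) θ) * pa s α β (-1) θ'
          + (starRingEnd ℂ) (pb s α β (-1) θ) * pb s α β (-1) θ')
      + (((starRingEnd ℂ) (pa s α β (-1) θ) * pa s α β 1 θ'
          + (starRingEnd ℂ) (pb s α β (-1) θ) * pb s α β 1 θ') * (EE θ * EE θ') ^ t
      + ((starRingEnd ℂ) (pa s α β 1 θ) * pa s α β (-1) θ'
          + (starRingEnd ℂ) (pb s α β 1 θ) * pb s α β (-1) θ') *
          (starRingEnd ℂ) ((EE θ * EE θ') ^ t)) := by
  have hu : (starRingEnd ℂ) ((-(Complex.I * s)) ^ t) * (-(Complex.I * s)) ^ t = 1 := by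
    rw [map_pow, ← mul_pow]
    have hs' : (s : ℂ) ^ 2 = 1 := by exact_mod_cast hs
    have : (starRingEnd ℂ) (-(Complex.I * s)) * (-(Complex.I * s)) = 1 := by
      simp only [map_neg, map_mul, Complex.conj_I, Complex.conj_ofReal]
      linear_combination hs' - (s : ℂ) ^ 2 * Complex.I_sq
    rw [this, one_pow]
  simp only [GG, Fa, Fb, map_mul, map_add, mul_pow, map_pow, Complex.conj_conj]
  rw [map_pow] at hu
  generalize (starRingEnd ℂ) (-(Complex.I * s)) ^ t = U at *
  generalize (-(Complex.I * s)) ^ t = V at *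
  generalize (starRingEnd ℂ) (EE θ) ^ t = A at *
  generalize (starRingEnd ℂ) (EE θ') ^ t = B at *
  generalize EE θ ^ t = D at *
  generalize EE θ' ^ t = E at *
  linear_combination ((A * (starRingEnd ℂ) (pa s α β 1 θ) + D * (starRingEnd ℂ) (pa s α β (-1) θ))
     * (E * pa s α β 1 θ' + B * pa s α β (-1) θ') +
     (A * (starRingEnd ℂ) (pb s α β 1 θ) + D * (starRingEnd ℂ) (pb s α β (-1) θ))
     * (E * pb s α β 1 θ' + B * pb s α β (-1) θ')) * hu

lemma GG_limit (s : ℝ) (hs : s ^ 2 = 1) (α β : ℂ) (hαβ : ‖α‖ ^ 2 + ‖β‖ ^ 2 = 1) (θ η : ℝ) :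
    Tendsto (fun t : ℕ => GG s α β t θ (θ + η / t)) atTop
      (𝓝 (Complex.exp (2 * Complex.I * η * vv θ) * (((1 + nn s α β θ) / 2 : ℝ) : ℂ)
        + Complex.exp (-(2 * Complex.I * η * vv θ)) * (((1 - nn s α β θ) / 2 : ℝ) : ℂ))) := by
  have hθ : Tendsto (fun t : ℕ => θ + η / t) atTop (𝓝 θ) := by
    simpa using (tendsto_const_div_atTop_nhds_zero_nat η).const_add θ
  have hg : ∀ σ τ : ℝ, Tendsto (fun t : ℕ =>
      (starRingEnd ℂ) (pa s α β σ θ) * pa s α β τ (θ + η / t)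
        + (starRingEnd ℂ) (pb s α β σ θ) * pb s α β τ (θ + η / t)) atTop
      (𝓝 (((1 + σ * τ + (σ + τ) * nn s α β θ) / 4 : ℝ) : ℂ)) := by
    intro σ τ
    rw [← gram s hs α β hαβ σ τ θ]
    exact ((((continuous_pa s α β τ).tendsto θ).comp hθ).const_mul _).add
      ((((continuous_pb s α β τ).tendsto θ).comp hθ).const_mul _)
  have hp := phase_limit θ η
  have hpc := (Complex.continuous_conj.tendsto _).comp hp
  have hexp : (starRingEnd ℂ) (Complex.exp (2 * Complex.I * η * vv θ))
      = Complex.exp (-(2 * Complex.I * η * vv θ)) := by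
    rw [← Complex.exp_conj]
    simp only [map_mul, Complex.conj_I, Complex.conj_ofReal, map_ofNat]
    congr 1; ring
  rw [hexp] at hpc
  have hz1 : Tendsto (fun t : ℕ => ((starRingEnd ℂ) (pa s α β (-1) θ) * pa s α β 1 (θ + η / t)
        + (starRingEnd ℂ) (pb s α β (-1) θ) * pb s α β 1 (θ + η / t))
        * (EE θ * EE (θ + η / t)) ^ t) atTop (𝓝 0) := by
    refine Filter.Tendsto.zero_mul_isBoundedUnder_le ?_ ?_
    · simpa using hg (-1) 1
    · refine isBoundedUnder_of ⟨1, fun t => ?_⟩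
      simp [EE_norm]
  have hz2 : Tendsto (fun t : ℕ => ((starRingEnd ℂ) (pa s α β 1 θ) * pa s α β (-1) (θ + η / t)
        + (starRingEnd ℂ) (pb s α β 1 θ) * pb s α β (-1) (θ + η / t))
        * (starRingEnd ℂ) ((EE θ * EE (θ + η / t)) ^ t)) atTop (𝓝 0) := by
    refine Filter.Tendsto.zero_mul_isBoundedUnder_le ?_ ?_
    · simpa using hg 1 (-1)
    · refine isBoundedUnder_of ⟨1, fun t => ?_⟩
      simp [EE_norm]
  have := ((hp.mul (hg 1 1)).add (hpc.mul (hg (-1) (-1)))).add (hz1.add hz2)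
  simp only [GG_eq s hs]
  have e1 : (((1 + nn s α β θ) / 2 : ℝ) : ℂ)
      = (((1 + 1 * 1 + (1 + 1) * nn s α β θ) / 4 : ℝ) : ℂ) := by push_cast; ring
  have e2 : (((1 - nn s α β θ) / 2 : ℝ) : ℂ)
      = (((1 + -1 * -1 + (-1 + -1) * nn s α β θ) / 4 : ℝ) : ℂ) := by push_cast; ring
  rw [e1, e2]
  rw [add_zero, add_zero] at this
  exact this

/-! ### Dominated convergence -/

lemma norm_comb_le (σ : ℝ) (hσ : |σ| = 1) (a b c d q : ℂ) (ha : ‖a‖ ≤ 1) (hb : ‖b‖ ≤ 1)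
    (hc : ‖c‖ ≤ 1) (hd : ‖d‖ ≤ 1) (hq : 1 ≤ ‖q‖) :
    ‖(a + σ * ((c * a + d * b) / q)) / 2‖ ≤ 3 / 2 := by
  have h1 : ‖c * a + d * b‖ ≤ 2 := by
    refine (norm_add_le _ _).trans ?_
    rw [norm_mul, norm_mul]
    nlinarith [norm_nonneg a, norm_nonneg b, norm_nonneg c, norm_nonneg d]
  have h2 : ‖(c * a + d * b) / q‖ ≤ 2 := by
    rw [norm_div]
    exact (div_le_self (norm_nonneg _) hq).trans h1
  rw [norm_div, Complex.norm_ofNat]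
  have h3 : ‖a + σ * ((c * a + d * b) / q)‖ ≤ 3 := by
    refine (norm_add_le _ _).trans ?_
    rw [norm_mul, Complex.norm_real, Real.norm_eq_abs, hσ]
    linarith
  linarith

lemma norm_F_le (s : ℝ) (hs : s ^ 2 = 1) (α β : ℂ) (hαβ : ‖α‖ ^ 2 + ‖β‖ ^ 2 = 1) (t : ℕ)
    (θ : ℝ) : ‖Fa s α β t θ‖ ≤ 3 ∧ ‖Fb s α β t θ‖ ≤ 3 := by
  have hs1 : |s| = 1 := by
    rw [← sq_eq_sq₀ (abs_nonneg _) zero_le_one, sq_abs, hs]; norm_num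
  have hα : ‖α‖ ≤ 1 := by nlinarith [norm_nonneg α, sq_nonneg ‖β‖]
  have hβ : ‖β‖ ≤ 1 := by nlinarith [norm_nonneg β, sq_nonneg ‖α‖]
  have hc : ‖(Real.cos θ : ℂ)‖ ≤ 1 := by
    rw [Complex.norm_real]; exact Real.abs_cos_le_one θ
  have hq : 1 ≤ ‖(qq θ : ℂ)‖ := by
    rw [Complex.norm_real, Real.norm_eq_abs, abs_of_pos (qq_pos θ)]; exact one_le_qq θ
  have he : ‖Complex.I * s * Complex.exp (Complex.I * θ)‖ ≤ 1 := by
    rw [norm_mul, norm_mul, Complex.norm_I, Complex.norm_real, Real.norm_eq_abs, hs1,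
      mul_comm Complex.I, Complex.norm_exp_ofReal_mul_I]; norm_num
  have he' : ‖Complex.I * s * Complex.exp (-(Complex.I * θ))‖ ≤ 1 := by
    rw [norm_mul, norm_mul, Complex.norm_I, Complex.norm_real, Real.norm_eq_abs, hs1,
      show -(Complex.I * (θ : ℂ)) = ((-θ : ℝ) : ℂ) * Complex.I by push_cast; ring,
      Complex.norm_exp_ofReal_mul_I]; norm_num
  have hpa : ∀ σ : ℝ, |σ| = 1 → ‖pa s α β σ θ‖ ≤ 3 / 2 := fun σ hσ =>
    norm_comb_le σ hσ α β _ _ _ hα hβ hc he hq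
  have hpb : ∀ σ : ℝ, |σ| = 1 → ‖pb s α β σ θ‖ ≤ 3 / 2 := by
    intro σ hσ
    have := norm_comb_le (-σ) (by rwa [abs_neg]) β α _ _ _ hβ hα hc he' hq
    convert this using 2
    rw [pb]; push_cast; ring
  have hu : ‖(-(Complex.I * (s : ℂ))) ^ t‖ = 1 := by
    rw [norm_pow, norm_neg, norm_mul, Complex.norm_I, Complex.norm_real, Real.norm_eq_abs, hs1]
    norm_num
  constructor
  · rw [Fa, norm_mul, hu, one_mul]
    refine (norm_add_le _ _).trans ?_
    simp only [norm_mul, norm_pow, RCLike.norm_conj, EE_norm, one_pow, one_mul]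
    linarith [hpa 1 (by norm_num), hpa (-1) (by norm_num)]
  · rw [Fb, norm_mul, hu, one_mul]
    refine (norm_add_le _ _).trans ?_
    simp only [norm_mul, norm_pow, RCLike.norm_conj, EE_norm, one_pow, one_mul]
    linarith [hpb 1 (by norm_num), hpb (-1) (by norm_num)]

lemma norm_GG_le (s : ℝ) (hs : s ^ 2 = 1) (α β : ℂ) (hαβ : ‖α‖ ^ 2 + ‖β‖ ^ 2 = 1) (t : ℕ)
    (θ θ' : ℝ) : ‖GG s α β t θ θ'‖ ≤ 18 := by
  obtain ⟨a, b⟩ := norm_F_le s hs α β hαβ t θ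
  obtain ⟨a', b'⟩ := norm_F_le s hs α β hαβ t θ'
  refine (norm_add_le _ _).trans ?_
  simp only [norm_mul, RCLike.norm_conj]
  have h1 := mul_le_mul a a' (norm_nonneg _) (by norm_num)
  have h2 := mul_le_mul b b' (norm_nonneg _) (by norm_num)
  linarith

lemma continuous_Fa (s : ℝ) (α β : ℂ) (t : ℕ) : Continuous (Fa s α β t) := by
  have := continuous_EE
  have := continuous_pa s α β 1
  have := continuous_pa s α β (-1)
  have := Complex.continuous_conj
  unfold Fa; fun_prop

lemma continuous_Fb (s : ℝ) (α β : ℂ) (t : ℕ) : Continuous (Fb s α β t) := by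
  have := continuous_EE
  have := continuous_pb s α β 1
  have := continuous_pb s α β (-1)
  have := Complex.continuous_conj
  unfold Fb; fun_prop

lemma continuous_GG (s : ℝ) (α β : ℂ) (t : ℕ) (δ : ℝ) :
    Continuous (fun θ => GG s α β t θ (θ + δ)) := by
  have := continuous_Fa s α β t
  have := continuous_Fb s α β t
  have := Complex.continuous_conj
  unfold GG; fun_prop

lemma qq_pi_sub (θ : ℝ) : qq (π - θ) = qq θ := by simp [qq, Real.cos_pi_sub]

lemma vv_pi_sub (θ : ℝ) : vv (π - θ) = -vv θ := by
  simp [vv, qq_pi_sub, Real.cos_pi_sub, neg_div]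

lemma nn_diff (s : ℝ) (α β : ℂ) (θ : ℝ) :
    nn s α β θ - nn s α β (π - θ) = 2 * vv θ * CC s α β := by
  simp only [nn, vv_pi_sub, qq_pi_sub, Real.sin_pi_sub]; ring

lemma continuous_nn (s : ℝ) (α β : ℂ) : Continuous (nn s α β) := by
  have := continuous_qq
  have := continuous_vv
  have h : ∀ θ : ℝ, qq θ ≠ 0 := fun θ => (qq_pos θ).ne'
  unfold nn; fun_prop (disch := assumption)

lemma limit_integral (s : ℝ) (α β : ℂ) (η : ℝ) :
    ∫ θ in (0 : ℝ)..π, (Complex.exp (2 * Complex.I * η * vv θ) * (((1 + nn s α β θ) / 2 : ℝ) : ℂ)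
        + Complex.exp (-(2 * Complex.I * η * vv θ)) * (((1 - nn s α β θ) / 2 : ℝ) : ℂ))
    = ∫ θ in (0 : ℝ)..π,
      Complex.exp (2 * Complex.I * η * vv θ) * ((1 + CC s α β * vv θ : ℝ) : ℂ) := by
  have c1 := continuous_vv
  have c2 := continuous_nn s α β
  rw [intervalIntegral.integral_add (by apply Continuous.intervalIntegrable; fun_prop)
    (by apply Continuous.intervalIntegrable; fun_prop)]
  have h := intervalIntegral.integral_comp_sub_left (a := 0) (b := π) (fun θ : ℝ =>
    Complex.exp (-(2 * Complex.I * η * vv θ)) * (((1 - nn s α β θ) / 2 : ℝ) : ℂ)) π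
  rw [sub_self, sub_zero] at h
  rw [← h, ← intervalIntegral.integral_add (by apply Continuous.intervalIntegrable; fun_prop)
    (by apply Continuous.intervalIntegrable; fun_prop)]
  congr 1
  funext θ
  have hn : nn s α β (π - θ) = nn s α β θ - 2 * vv θ * CC s α β := by
    linarith [nn_diff s α β θ]
  rw [hn, vv_pi_sub]
  have : -(2 * Complex.I * (η : ℂ) * ((-vv θ : ℝ) : ℂ)) = 2 * Complex.I * η * vv θ := by
    push_cast; ring
  rw [this]
  push_cast; ring

/-- convergence of characteristic functions, raw form -/
lemma char_limit (ρ ν : ℝ) (n : ℤ) (hρ : ρ = 1 / Real.sqrt 2) (hν : ν = π / 2 + n * π)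
    (α β : ℂ) (hαβ : ‖α‖ ^ 2 + ‖β‖ ^ 2 = 1) (s : ℝ) (hs : s = (-1 : ℝ) ^ n) (η : ℝ) :
    Tendsto (fun t : ℕ => (π : ℂ) * ∑ x ∈ Finset.Icc (-(t : ℤ)) t,
        Complex.exp (2 * Complex.I * ((η / t : ℝ) : ℂ) * x) * (qprob ρ ν α β t x : ℂ)) atTop
      (𝓝 (∫ θ in (0 : ℝ)..π,
        Complex.exp (2 * Complex.I * η * vv θ) * ((1 + CC s α β * vv θ : ℝ) : ℂ))) := by
  have hs2 : s ^ 2 = 1 := by rw [hs]; exact neg_one_zpow_sq n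
  have hGint : ∀ t : ℕ, ∀ δ : ℝ, ∫ θ in (0 : ℝ)..π, GG s α β t θ (θ + δ)
      = (π : ℂ) * ∑ x ∈ Finset.Icc (-(t : ℤ)) t,
        Complex.exp (2 * Complex.I * δ * x) * (qprob ρ ν α β t x : ℂ) := by
    intro t δ
    have p0 := parseval (Finset.Icc (-(t : ℤ)) t) (fun x => qwalk ρ ν α β t x 0) δ
    have p1 := parseval (Finset.Icc (-(t : ℤ)) t) (fun x => qwalk ρ ν α β t x 1) δ
    simp only [← (F_eq_sum ρ ν n hρ hν α β s hs _ t).1] at p0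
    simp only [← (F_eq_sum ρ ν n hρ hν α β s hs _ t).2] at p1
    have ca := continuous_Fa s α β t
    have cb := continuous_Fb s α β t
    have cc := Complex.continuous_conj
    simp only [GG]
    rw [intervalIntegral.integral_add (by apply Continuous.intervalIntegrable; fun_prop)
      (by apply Continuous.intervalIntegrable; fun_prop), p0, p1, ← mul_add,
      ← Finset.sum_add_distrib]
    congr 1
    refine Finset.sum_congr rfl fun x _ => ?_
    rw [qprob]; push_cast; ring
  simp only [← hGint, ← limit_integral]
  refine intervalIntegral.tendsto_integral_filter_of_dominated_convergence (fun _ => 18) ?_ ?_ ?_ ?_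
  · exact Eventually.of_forall fun t =>
      (continuous_GG s α β t (η / t)).aestronglyMeasurable
  · exact Eventually.of_forall fun t => Eventually.of_forall fun θ _ =>
      norm_GG_le s hs2 α β hαβ t θ _
  · exact intervalIntegrable_const
  · exact Eventually.of_forall fun θ _ => GG_limit s hs2 α β hαβ θ η

/-- total mass one -/
lemma mass_one (ρ ν : ℝ) (n : ℤ) (hρ : ρ = 1 / Real.sqrt 2) (hν : ν = π / 2 + n * π)
    (α β : ℂ) (hαβ : ‖α‖ ^ 2 + ‖β‖ ^ 2 = 1) (t : ℕ) :
    ∑ x ∈ Finset.Icc (-(t : ℤ)) t, qprob ρ ν α β t x = 1 := by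
  obtain ⟨s, hs⟩ : ∃ s : ℝ, s = (-1 : ℝ) ^ n := ⟨_, rfl⟩
  have hs2 : s ^ 2 = 1 := by rw [hs]; exact neg_one_zpow_sq n
  have p0 := parseval (Finset.Icc (-(t : ℤ)) t) (fun x => qwalk ρ ν α β t x 0) 0
  have p1 := parseval (Finset.Icc (-(t : ℤ)) t) (fun x => qwalk ρ ν α β t x 1) 0
  simp only [← (F_eq_sum ρ ν n hρ hν α β s hs _ t).1] at p0
  simp only [← (F_eq_sum ρ ν n hρ hν α β s hs _ t).2] at p1
  have ca := continuous_Fa s α β t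
  have cb := continuous_Fb s α β t
  have cc := Complex.continuous_conj
  have h := congrArg₂ (· + ·) p0 p1
  rw [← intervalIntegral.integral_add (by apply Continuous.intervalIntegrable; fun_prop)
      (by apply Continuous.intervalIntegrable; fun_prop), ← mul_add,
      ← Finset.sum_add_distrib] at h
  have hG : ∀ θ : ℝ, (starRingEnd ℂ) (Fa s α β t θ) * Fa s α β t (θ + 0)
      + (starRingEnd ℂ) (Fb s α β t θ) * Fb s α β t (θ + 0) = 1 := by
    intro θ
    have := GG_eq s hs2 α β t θ θ
    rw [gram s hs2 α β hαβ, gram s hs2 α β hαβ, gram s hs2 α β hαβ, gram s hs2 α β hαβ,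
      mul_comm ((starRingEnd ℂ) (EE θ)), EE_mul_conj] at this
    rw [add_zero]
    refine this.trans ?_
    simp only [one_pow, map_one]
    push_cast; ring
  simp only [hG] at h
  have hpi : (π : ℂ) ≠ 0 := by exact_mod_cast Real.pi_ne_zero
  have h' : (π : ℂ) * 1 = π * ((∑ x ∈ Finset.Icc (-(t : ℤ)) t, qprob ρ ν α β t x : ℝ) : ℂ) := by
    rw [intervalIntegral.integral_const] at h
    simp only [sub_zero, Complex.real_smul] at h
    rw [h]
    congr 1
    push_cast
    refine Finset.sum_congr rfl fun x _ => ?_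
    rw [qprob]; simp
  have := mul_left_cancel₀ hpi h'
  exact_mod_cast this.symm

/-! ### Measures -/

lemma qprob_nonneg (ρ ν : ℝ) (α β : ℂ) (t : ℕ) (x : ℤ) : 0 ≤ qprob ρ ν α β t x := by
  unfold qprob; positivity

/-- law of `X_t / t` -/
def wm (ρ ν : ℝ) (α β : ℂ) (t : ℕ) : Measure ℝ :=
  ∑ x ∈ Finset.Icc (-(t : ℤ)) t,
    ENNReal.ofReal (qprob ρ ν α β t x) • Measure.dirac ((x : ℝ) / t)

lemma wm_prob (ρ ν : ℝ) (n : ℤ) (hρ : ρ = 1 / Real.sqrt 2) (hν : ν = π / 2 + n * π)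
    (α β : ℂ) (hαβ : ‖α‖ ^ 2 + ‖β‖ ^ 2 = 1) (t : ℕ) :
    IsProbabilityMeasure (wm ρ ν α β t) := by
  constructor
  simp only [wm, Measure.coe_finsetSum, Finset.sum_apply, Measure.smul_apply, measure_univ,
    smul_eq_mul, mul_one]
  rw [← ENNReal.ofReal_sum_of_nonneg fun x _ => qprob_nonneg _ _ _ _ _ _,
    mass_one ρ ν n hρ hν α β hαβ t, ENNReal.ofReal_one]

lemma wm_integral {E : Type*} [NormedAddCommGroup E] [NormedSpace ℝ E] [CompleteSpace E]
    (ρ ν : ℝ) (α β : ℂ) (t : ℕ) (f : ℝ → E) :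
    ∫ y, f y ∂(wm ρ ν α β t)
      = ∑ x ∈ Finset.Icc (-(t : ℤ)) t, qprob ρ ν α β t x • f ((x : ℝ) / t) := by
  rw [wm, integral_finsetSum_measure]
  · refine Finset.sum_congr rfl fun x _ => ?_
    rw [integral_smul_measure, integral_dirac, ENNReal.toReal_ofReal (qprob_nonneg _ _ _ _ _ _)]
  · intro x _
    exact (integrable_dirac (by simp)).smul_measure ENNReal.ofReal_ne_top

/-- limit measure -/
def lm (C : ℝ) : Measure ℝ :=
  ((volume.restrict (Set.Ioo 0 π)).withDensity
    (fun θ => ENNReal.ofReal ((1 + C * vv θ) / π))).map vv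

lemma vv_sq_le (θ : ℝ) : vv θ ^ 2 ≤ 1 / 2 := by
  rw [vv, div_pow, qq_sq, div_le_div_iff₀ (by positivity) (by norm_num)]
  nlinarith [Real.cos_sq_le_one θ]

lemma CC_sq_le (s : ℝ) (hs : s ^ 2 = 1) (α β : ℂ) (hαβ : ‖α‖ ^ 2 + ‖β‖ ^ 2 = 1) :
    CC s α β ^ 2 ≤ 2 := by
  have h : (α * (starRingEnd ℂ) β).im ^ 2 ≤ ‖α‖ ^ 2 * ‖β‖ ^ 2 := by
    have := Complex.abs_im_le_norm (α * (starRingEnd ℂ) β)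
    rw [norm_mul, RCLike.norm_conj] at this
    rw [← mul_pow, ← sq_abs]
    exact pow_le_pow_left₀ (abs_nonneg _) this 2
  rw [CC]
  generalize (α * (starRingEnd ℂ) β).im = m at *
  generalize ‖α‖ ^ 2 = a at *
  generalize ‖β‖ ^ 2 = b at *
  have h1 : (a - b + s * 2 * m) ^ 2 ≤ 2 * ((a - b) ^ 2 + 4 * (s ^ 2 * m ^ 2)) := by
    nlinarith [sq_nonneg (a - b - s * 2 * m)]
  rw [hs] at h1
  nlinarith

lemma dens_nonneg (C : ℝ) (hC : C ^ 2 ≤ 2) (θ : ℝ) : 0 ≤ (1 + C * vv θ) / π := by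
  have h : (C * vv θ) ^ 2 ≤ 1 := by
    rw [mul_pow]; nlinarith [vv_sq_le θ, sq_nonneg C, sq_nonneg (vv θ)]
  have := (abs_le.1 ((sq_le_one_iff_abs_le_one _).1 h)).1
  apply div_nonneg _ Real.pi_pos.le
  linarith

lemma lm_integral {E : Type*} [NormedAddCommGroup E] [NormedSpace ℝ E]
    (C : ℝ) (hC : C ^ 2 ≤ 2) (f : ℝ → E) (hf : StronglyMeasurable f) :
    ∫ y, f y ∂(lm C) = ∫ θ in Set.Ioo 0 π, ((1 + C * vv θ) / π) • f (vv θ) := by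
  have c1 := continuous_vv
  rw [lm, integral_map c1.measurable.aemeasurable hf.aestronglyMeasurable,
    integral_withDensity_eq_integral_toReal_smul]
  · simp only [ENNReal.toReal_ofReal (dens_nonneg C hC _)]
  · apply Measurable.ennreal_ofReal
    apply Continuous.measurable; fun_prop
  · exact Eventually.of_forall fun θ => ENNReal.ofReal_lt_top

lemma integral_vv : ∫ θ in (0 : ℝ)..π, vv θ = 0 := by
  have h := intervalIntegral.integral_comp_sub_left (a := 0) (b := π) vv π
  simp only [vv_pi_sub, intervalIntegral.integral_neg, sub_self, sub_zero] at h
  linarith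

lemma lm_prob (C : ℝ) (hC : C ^ 2 ≤ 2) : IsProbabilityMeasure (lm C) := by
  have c1 := continuous_vv
  have h := lm_integral C hC (fun _ => (1 : ℝ)) stronglyMeasurable_const
  have h2 : ∫ θ in Set.Ioo 0 π, ((1 + C * vv θ) / π) • (1 : ℝ) = 1 := by
    rw [← integral_Ioc_eq_integral_Ioo, ← intervalIntegral.integral_of_le Real.pi_pos.le]
    simp only [smul_eq_mul, mul_one]
    rw [intervalIntegral.integral_div, intervalIntegral.integral_add
      (by apply Continuous.intervalIntegrable; fun_prop)
      (by apply Continuous.intervalIntegrable; fun_prop), intervalIntegral.integral_const_mul,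
      integral_vv]
    simp [Real.pi_ne_zero]
  rw [h2, integral_const, smul_eq_mul, mul_one] at h
  constructor
  rw [Measure.real, ENNReal.toReal_eq_one_iff] at h
  exact h

lemma hasDerivAt_vv (θ : ℝ) : HasDerivAt vv (-Real.sin θ / qq θ ^ 3) θ := by
  have hq := (qq_pos θ).ne'
  refine ((Real.hasDerivAt_cos θ).div (hasDerivAt_qq θ) hq).congr_deriv ?_
  have h1 := qq_sq θ
  field_simp
  linear_combination (-Real.sin θ) * h1

lemma vv_strictAnti : StrictAntiOn vv (Set.Icc 0 π) := by
  apply strictAntiOn_of_deriv_neg (convex_Icc _ _) continuous_vv.continuousOn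
  intro θ hθ
  rw [interior_Icc] at hθ
  rw [(hasDerivAt_vv θ).deriv, neg_div, neg_lt_zero]
  exact div_pos (Real.sin_pos_of_mem_Ioo hθ) (pow_pos (qq_pos θ) 3)

lemma vv_zero : vv 0 = 1 / Real.sqrt 2 := by
  simp only [vv, qq, Real.cos_zero]; norm_num

lemma vv_pi : vv π = -(1 / Real.sqrt 2) := by
  have := vv_pi_sub 0
  rw [sub_zero, vv_zero] at this; exact this

lemma vv_image : vv '' Set.Ioo 0 π = Set.Ioo (-(1 / Real.sqrt 2)) (1 / Real.sqrt 2) := by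
  apply Set.Subset.antisymm
  · rintro _ ⟨θ, hθ, rfl⟩
    rw [← vv_pi, ← vv_zero]
    exact ⟨vv_strictAnti ⟨hθ.1.le, hθ.2.le⟩ ⟨Real.pi_pos.le, le_rfl⟩ hθ.2,
      vv_strictAnti ⟨le_rfl, Real.pi_pos.le⟩ ⟨hθ.1.le, hθ.2.le⟩ hθ.1⟩
  · rw [← vv_pi, ← vv_zero]
    exact intermediate_value_Ioo' Real.pi_pos.le continuous_vv.continuousOn

lemma vv_injOn : Set.InjOn vv (Set.Ioo 0 π) :=
  (vv_strictAnti.mono Set.Ioo_subset_Icc_self).injOn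

lemma lm_noatom (C : ℝ) (x : ℝ) : lm C {x} = 0 := by
  rw [lm, Measure.map_apply continuous_vv.measurable (measurableSet_singleton x)]
  refine withDensity_absolutelyContinuous _ _ ?_
  rw [Measure.restrict_apply (continuous_vv.measurable (measurableSet_singleton x))]
  apply Set.Subsingleton.measure_zero
  rintro a ⟨ha, ha'⟩ b ⟨hb, hb'⟩
  exact vv_injOn ha' hb' (by rw [Set.mem_preimage, Set.mem_singleton_iff] at ha hb; rw [ha, hb])

lemma jac (θ : ℝ) (hθ : θ ∈ Set.Ioo 0 π) (T : ℝ) :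
    |-Real.sin θ / qq θ ^ 3| * (T / (π * (1 - vv θ ^ 2) * Real.sqrt (1 - 2 * vv θ ^ 2)))
      = T / π := by
  have hS := Real.sin_pos_of_mem_Ioo hθ
  have hq := qq_pos θ
  have h1 : 1 - vv θ ^ 2 = 1 / qq θ ^ 2 := by
    rw [vv, div_pow]; field_simp; linear_combination qq_sq θ
  have h2 : 1 - 2 * vv θ ^ 2 = (Real.sin θ / qq θ) ^ 2 := by
    rw [vv, div_pow, div_pow, Real.sin_sq]; field_simp; linear_combination qq_sq θ
  rw [h1, h2, Real.sqrt_sq (by positivity), neg_div, abs_neg, abs_of_pos (by positivity)]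
  have := Real.pi_ne_zero
  field_simp

lemma lm_Iic (n : ℤ) (α β : ℂ) (s : ℝ) (hs : s = (-1 : ℝ) ^ n) (hαβ : ‖α‖ ^ 2 + ‖β‖ ^ 2 = 1)
    (x : ℝ) : (lm (CC s α β)).real (Set.Iic x) = ∫ y in Set.Iic x, densStd n α β y := by
  have hs2 : s ^ 2 = 1 := by rw [hs]; exact neg_one_zpow_sq n
  have hC := CC_sq_le s hs2 α β hαβ
  rw [← integral_indicator_one measurableSet_Iic, lm_integral _ hC _
    (stronglyMeasurable_one.indicator measurableSet_Iic),
    ← integral_indicator measurableSet_Iic]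
  rw [← setIntegral_eq_integral_of_forall_compl_eq_zero
    (s := Set.Ioo (-(1 / Real.sqrt 2)) (1 / Real.sqrt 2))
    (f := (Set.Iic x).indicator (densStd n α β)), ← vv_image,
    integral_image_eq_integral_abs_deriv_smul measurableSet_Ioo
      (fun θ _ => (hasDerivAt_vv θ).hasDerivWithinAt) vv_injOn]
  · refine setIntegral_congr_fun measurableSet_Ioo fun θ hθ => ?_
    have hmem : vv θ ∈ Set.Ioo (-(1 / Real.sqrt 2)) (1 / Real.sqrt 2) := by
      rw [← vv_image]; exact ⟨θ, hθ, rfl⟩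
    by_cases hx : vv θ ∈ Set.Iic x
    · simp only [Set.indicator_of_mem hx, smul_eq_mul, Pi.one_apply, mul_one]
      rw [densStd, if_pos hmem, jac θ hθ, Theta, CC, hs]
    · simp only [Set.indicator_of_notMem hx, smul_zero]
  · intro y hy
    by_cases hx : y ∈ Set.Iic x
    · rw [Set.indicator_of_mem hx, densStd, if_neg hy]
    · rw [Set.indicator_of_notMem hx]

lemma wm_Iic (ρ ν : ℝ) (α β : ℂ) (t : ℕ) (ht : 0 < t) (x : ℝ) :
    (wm ρ ν α β t).real (Set.Iic x)
      = ∑' y : ℤ, if (y : ℝ) ≤ x * t then qprob ρ ν α β t y else 0 := by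
  rw [← integral_indicator_one measurableSet_Iic, wm_integral,
    tsum_eq_sum (s := Finset.Icc (-(t : ℤ)) t)]
  · refine Finset.sum_congr rfl fun y _ => ?_
    have ht' : (0 : ℝ) < t := by exact_mod_cast ht
    simp only [Set.indicator_apply, Set.mem_Iic, div_le_iff₀ ht', Pi.one_apply, smul_eq_mul,
      mul_ite, mul_one, mul_zero]
  · intro y hy
    have : qprob ρ ν α β t y = 0 := by
      rw [qprob, qwalk_support ρ ν α β t y hy]; simp
    rw [this, ite_self]

lemma char_tendsto (ρ ν : ℝ) (n : ℤ) (hρ : ρ = 1 / Real.sqrt 2) (hν : ν = π / 2 + n * π)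
    (α β : ℂ) (hαβ : ‖α‖ ^ 2 + ‖β‖ ^ 2 = 1) (s : ℝ) (hs : s = (-1 : ℝ) ^ n) (ξ : ℝ) :
    Tendsto (fun t : ℕ => charFun (wm ρ ν α β t) ξ) atTop
      (𝓝 (charFun (lm (CC s α β)) ξ)) := by
  have hs2 : s ^ 2 = 1 := by rw [hs]; exact neg_one_zpow_sq n
  have hC := CC_sq_le s hs2 α β hαβ
  have hpi : (π : ℂ) ≠ 0 := by exact_mod_cast Real.pi_ne_zero
  have h := (char_limit ρ ν n hρ hν α β hαβ s hs (ξ / 2)).const_mul ((π : ℂ)⁻¹)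
  simp only [charFun_apply_real, wm_integral]
  rw [lm_integral _ hC _ (by apply Continuous.stronglyMeasurable; fun_prop)]
  rw [← integral_Ioc_eq_integral_Ioo, ← intervalIntegral.integral_of_le Real.pi_pos.le]
  have e1 : (π : ℂ)⁻¹ * ∫ θ in (0 : ℝ)..π, Complex.exp (2 * Complex.I * ((ξ / 2 : ℝ) : ℂ) * vv θ)
        * ((1 + CC s α β * vv θ : ℝ) : ℂ)
      = ∫ θ in (0 : ℝ)..π, ((1 + CC s α β * vv θ) / π) •
          Complex.exp (ξ * vv θ * Complex.I) := by
    rw [← intervalIntegral.integral_const_mul]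
    congr 1
    funext θ
    rw [Complex.real_smul]
    have : 2 * Complex.I * ((ξ / 2 : ℝ) : ℂ) * vv θ = ξ * vv θ * Complex.I := by
      push_cast; ring
    rw [this]
    push_cast; field_simp
  rw [e1] at h
  refine h.congr fun t => ?_
  rw [inv_mul_cancel_left₀ hpi]
  refine Finset.sum_congr rfl fun x _ => ?_
  rw [Complex.real_smul, mul_comm]
  congr 2
  push_cast; ring

/-- at `ρ = 1/√2`, `ν = π/2 + nπ`, the walk converges in distribution to
the standard coined-walk density. -/
theorem stmt1 (ρ ν : ℝ) (n : ℤ) (hρ : ρ = 1 / Real.sqrt 2) (hν : ν = π / 2 + n * π)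
    (α β : ℂ) (hαβ : ‖α‖ ^ 2 + ‖β‖ ^ 2 = 1) (x : ℝ) :
    Tendsto (fun t : ℕ => ∑' y : ℤ, if (y : ℝ) ≤ x * t then qprob ρ ν α β t y else 0)
      atTop (𝓝 (∫ y in Set.Iic x, densStd n α β y)) := by
  obtain ⟨s, hs⟩ : ∃ s : ℝ, s = (-1 : ℝ) ^ n := ⟨_, rfl⟩
  have hs2 : s ^ 2 = 1 := by rw [hs]; exact neg_one_zpow_sq n
  have hC := CC_sq_le s hs2 α β hαβ
  let μ : ProbabilityMeasure ℝ := ⟨lm (CC s α β), lm_prob _ hC⟩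
  let μs : ℕ → ProbabilityMeasure ℝ := fun t =>
    ⟨wm ρ ν α β t, wm_prob ρ ν n hρ hν α β hαβ t⟩
  have hlim : Tendsto μs atTop (𝓝 μ) :=
    ProbabilityMeasure.tendsto_iff_tendsto_charFun.2 fun ξ =>
      char_tendsto ρ ν n hρ hν α β hαβ s hs ξ
  have hfr : (μ : Measure ℝ) (frontier (Set.Iic x)) = 0 := by
    rw [frontier_Iic]; exact lm_noatom _ x
  have h := ProbabilityMeasure.tendsto_measure_of_null_frontier_of_tendsto' hlim hfr
  have h2 := (ENNReal.tendsto_toReal (measure_ne_top (μ : Measure ℝ) (Set.Iic x))).comp h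
  rw [← lm_Iic n α β s hs hαβ x]
  refine h2.congr' ?_
  filter_upwards [eventually_gt_atTop 0] with t ht
  rw [← wm_Iic ρ ν α β t ht x]
  rfl

end
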